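/- arXiv:1205.0369 — 2 statements merged into one kernel-verified Lean document; each statement's English description precedes it below -/
import Mathlib

section
/- Let r ≥ 2 and let k_1, …, k_r be elements of the field ℚ(k_1,…,k_r) of rational functions (equivalently, state it as a polynomial identity in ℚ[k_1,…,k_r]), and set K = k_1 + ⋯ + k_r. Then the sum of wt(T) over all unordered increasing trees T on the label set {1,…,r} equals k_1 k_2 ⋯ k_r · (K−1)_{r−2}, where (a)_m = a(a−1)⋯(a−m+1) denotes the falling factorial. -/
open scoped Classical

/-- An unordered increasing tree on the label set `{1, …, r}` (encoded as `Fin r`,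
with vertex `i : Fin r` representing the label `i+1`), given by its parent function:
the root (vertex `0`, i.e. label `1`) is fixed, and every other vertex has a
father with a strictly smaller label. -/
def IsParent {r : ℕ} (f : Fin r → Fin r) : Prop :=
  ∀ v : Fin r, if v.val = 0 then f v = v else (f v).val < v.val

/-- The hook of the vertex `v`: the set consisting of `v` together with all of its
descendants (`u` is a descendant of `v` if iterating the parent function starting
from `u` reaches `v`). -/
noncomputable def hookF {r : ℕ} (f : Fin r → Fin r) (v : Fin r) : Finset (Fin r) :=
  Finset.univ.filter fun u => ∃ n, f^[n] u = v

/-- The weight of an increasing tree: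
`wt(T) = ∏_{v ≠ root} k_{f(v)} · ((Σ_{u ∈ 𝔥_T(v)} k_u) − h_T(v) + 1)`,
as a polynomial in `ℚ[k_1, …, k_r]` (variable `i : Fin r` is `k_{i+1}`). -/
noncomputable def wtF {r : ℕ} (f : Fin r → Fin r) : MvPolynomial (Fin r) ℚ :=
  ∏ v ∈ Finset.univ.filter (fun v : Fin r => v.val ≠ 0),
    MvPolynomial.X (f v) *
      ((∑ u ∈ hookF f v, MvPolynomial.X u) - ((hookF f v).card : MvPolynomial (Fin r) ℚ) + 1)

/-- The falling factorial `(a)_m = a(a−1)⋯(a−m+1)`. -/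
def ffall {R : Type*} [CommRing R] (a : R) (m : ℕ) : R :=
  ∏ i ∈ Finset.range m, (a - (i : R))

/-!
The identity specialises the multivariate hook formula of Féray and Goulden: over any commutative
semiring, and with labels starting at `0`, the sum over increasing trees on `n ≥ 2` vertices of
`∏_{v ≠ 0} x_{f(v)} · ∑_{u ∈ 𝔥_T(v)} y_{v,u}` equals
`x_0 y_{n-1,n-1} ∏_{0 < v < n-1} (y_{v,v} ∑_{j ≤ v} x_j + x_v ∑_{v < j < n} y_{v,j})`.
The largest vertex of an increasing tree is a leaf. Removing it from below its father `i` leaves an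
arbitrary increasing tree in which each `y_{v,i}` has absorbed `y_{v,n-1}`, so induction applies,
and the sum over `i` telescopes. Taking `x_j = k_j`, `y_{v,v} = k_v` and `y_{v,u} = k_u - 1` for
`u ≠ v` turns the factor of `v` into `k_v (K - (n - 1 - v))`.
-/

open Finset

namespace IncreasingTree

section AttachLeaf

variable {n : ℕ}

/-- The parent function obtained from `f` by adding a new vertex, the largest one, whose father
is `i`. -/
def attachLeaf (f : Fin n → Fin n) (i : Fin n) : Fin (n + 1) → Fin (n + 1) :=
  Fin.lastCases i.castSucc fun v ↦ (f v).castSucc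

@[simp]
lemma attachLeaf_castSucc (f : Fin n → Fin n) (i v : Fin n) :
    attachLeaf f i v.castSucc = (f v).castSucc := by
  simp [attachLeaf]

@[simp]
lemma attachLeaf_last (f : Fin n → Fin n) (i : Fin n) :
    attachLeaf f i (Fin.last n) = i.castSucc := by
  simp [attachLeaf]

lemma attachLeaf_inj {f g : Fin n → Fin n} {i j : Fin n} :
    attachLeaf f i = attachLeaf g j ↔ f = g ∧ i = j := by
  simp [funext_iff, Fin.forall_fin_succ']

lemma isParent_attachLeaf_iff {f : Fin n → Fin n} {i : Fin n} :
    IsParent (attachLeaf f i) ↔ IsParent f := by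
  simp only [IsParent, Fin.forall_fin_succ', attachLeaf_castSucc, attachLeaf_last, Fin.val_castSucc,
    Fin.val_last, Fin.ext_iff, if_neg i.pos.ne', i.2, and_true]

lemma exists_attachLeaf_eq {g : Fin (n + 2) → Fin (n + 2)} (hg : IsParent g) :
    ∃ f i, attachLeaf f i = g := by
  have hlt (v) : (g v).val < n + 1 := by
    have := hg v
    grind
  refine ⟨fun v ↦ (g v.castSucc).castLT (hlt _), (g (Fin.last _)).castLT (hlt _), ?_⟩
  simp [funext_iff, Fin.forall_fin_succ']

lemma sum_isParent_succ {M : Type*} [AddCommMonoid M]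
    (F : (Fin (n + 2) → Fin (n + 2)) → M) :
    ∑ T : {g : Fin (n + 2) → Fin (n + 2) // IsParent g}, F T =
      ∑ i : Fin (n + 1), ∑ T : {f : Fin (n + 1) → Fin (n + 1) // IsParent f},
        F (attachLeaf T i) := by
  rw [← Fintype.sum_prod_type']
  symm
  refine Fintype.sum_bijective
    (fun p ↦ ⟨attachLeaf p.2.1 p.1, isParent_attachLeaf_iff.2 p.2.2⟩) ⟨?_, ?_⟩ _ _ fun _ ↦ rfl
  · rintro ⟨i, f, hf⟩ ⟨j, g, hg⟩ h
    obtain ⟨rfl, rfl⟩ := attachLeaf_inj.1 (congrArg Subtype.val h)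
    rfl
  · rintro ⟨g, hg⟩
    obtain ⟨f, i, rfl⟩ := exists_attachLeaf_eq hg
    exact ⟨(i, ⟨f, isParent_attachLeaf_iff.1 hg⟩), rfl⟩

end AttachLeaf

section Hook

variable {n : ℕ}

lemma mem_hookF {f : Fin n → Fin n} {u v : Fin n} : u ∈ hookF f v ↔ ∃ j, f^[j] u = v := by
  simp [hookF]

lemma self_mem_hookF (f : Fin n → Fin n) (v : Fin n) : v ∈ hookF f v :=
  mem_hookF.2 ⟨0, rfl⟩

lemma iterate_attachLeaf_castSucc (f : Fin n → Fin n) (i v : Fin n) (j : ℕ) :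
    (attachLeaf f i)^[j] v.castSucc = (f^[j] v).castSucc :=
  have h : Function.Semiconj Fin.castSucc f (attachLeaf f i) :=
    fun v ↦ (attachLeaf_castSucc f i v).symm
  ((h.iterate_right j).eq v).symm

lemma castSucc_mem_hookF_attachLeaf {f : Fin n → Fin n} {i u v : Fin n} :
    u.castSucc ∈ hookF (attachLeaf f i) v.castSucc ↔ u ∈ hookF f v := by
  simp [mem_hookF, iterate_attachLeaf_castSucc]

lemma last_mem_hookF_attachLeaf {f : Fin n → Fin n} {i v : Fin n} :
    Fin.last n ∈ hookF (attachLeaf f i) v.castSucc ↔ i ∈ hookF f v := by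
  rw [mem_hookF, ← Nat.or_exists_add_one]
  simp [mem_hookF, Function.iterate_succ_apply, iterate_attachLeaf_castSucc,
    (Fin.castSucc_ne_last v).symm]

lemma hookF_attachLeaf_last (f : Fin n → Fin n) (i : Fin n) :
    hookF (attachLeaf f i) (Fin.last n) = {Fin.last n} := by
  ext u
  induction u using Fin.lastCases with
  | last => simp [self_mem_hookF]
  | cast u => simp [mem_hookF, iterate_attachLeaf_castSucc]

lemma sum_hookF_attachLeaf {M : Type*} [AddCommMonoid M] (f : Fin n → Fin n) (i v : Fin n)
    (g : ℕ → M) :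
    ∑ u ∈ hookF (attachLeaf f i) v.castSucc, g u =
      ∑ u ∈ hookF f v, (g + Pi.single (i : ℕ) (g n) : ℕ → M) u := by
  rw [← univ_inter (hookF _ _), ← sum_ite_mem, Fin.sum_univ_castSucc]
  simp [castSucc_mem_hookF_attachLeaf, last_mem_hookF_attachLeaf, sum_add_distrib,
    Pi.single_apply, Fin.val_inj]

end Hook

section HookWeight

variable {R : Type*} [CommSemiring R]

/-- The weight `∏_{v ≠ root} x_{f(v)} · ∑_{u ∈ 𝔥_T(v)} y_{v,u}` of the multivariate hook formula.
The families `x` and `y` are indexed by all of `ℕ`, so that trees of different sizes share them. -/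
noncomputable def hookWeight {n : ℕ} (x : ℕ → R) (y : ℕ → ℕ → R) (f : Fin n → Fin n) : R :=
  ∏ v with v.val ≠ 0, x (f v) * ∑ u ∈ hookF f v, y v u

/-- The family obtained from `y` by adding column `m` to column `i`: the weights that remain when
the leaf `m` is merged into its father `i`. -/
def mergeLeaf (y : ℕ → ℕ → R) (m i : ℕ) : ℕ → ℕ → R :=
  fun v ↦ y v + Pi.single i (y v m)

/-- The factor contributed by the vertex `v` to the product side of the multivariate hook formula
for trees on `n` vertices. -/
def hookFactor (x : ℕ → R) (y : ℕ → ℕ → R) (n v : ℕ) : R :=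
  y v v * ∑ j ∈ range (v + 1), x j + x v * ∑ j ∈ Ico (v + 1) n, y v j

variable (x : ℕ → R) (y : ℕ → ℕ → R)

lemma hookWeight_attachLeaf {n : ℕ} (f : Fin (n + 1) → Fin (n + 1)) (i : Fin (n + 1)) :
    hookWeight x y (attachLeaf f i) =
      y (n + 1) (n + 1) * (x i * hookWeight x (mergeLeaf y (n + 1) i) f) := by
  simp only [hookWeight, prod_filter, Fin.prod_univ_castSucc (n := n + 1), attachLeaf_castSucc,
    attachLeaf_last, sum_hookF_attachLeaf, hookF_attachLeaf_last, sum_singleton, Fin.val_castSucc,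
    Fin.val_last, mergeLeaf, Pi.add_apply, ne_eq, n.succ_ne_zero, not_false_eq_true, if_true]
  ring

lemma sum_hookWeight_succ (n : ℕ) :
    ∑ T : {f : Fin (n + 2) → Fin (n + 2) // IsParent f}, hookWeight x y T.1 =
      y (n + 1) (n + 1) * ∑ i ∈ range (n + 1), x i *
        ∑ T : {f : Fin (n + 1) → Fin (n + 1) // IsParent f},
          hookWeight x (mergeLeaf y (n + 1) i) T.1 := by
  simp only [sum_isParent_succ, hookWeight_attachLeaf, sum_range, mul_sum]

lemma sum_hookWeight_one :
    ∑ T : {f : Fin 1 → Fin 1 // IsParent f}, hookWeight x y T.1 = 1 := by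
  have : Unique {f : Fin 1 → Fin 1 // IsParent f} :=
    { default := ⟨id, by simp [IsParent]⟩
      uniq := fun _ ↦ Subsingleton.elim _ _ }
  simp [hookWeight]

lemma hookFactor_succ {n v : ℕ} (hv : v < n) :
    hookFactor x y (n + 1) v = hookFactor x y n v + x v * y v n := by
  rw [hookFactor, hookFactor, sum_Ico_succ_top hv]
  ring

lemma hookFactor_mergeLeaf_of_lt {m i v : ℕ} (hiv : i < v) :
    hookFactor x (mergeLeaf y m i) m v = hookFactor x y m v := by
  have hi : i ∉ Ico (v + 1) m := by grind
  simp [hookFactor, mergeLeaf, sum_add_distrib, hiv.ne', hi]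

lemma hookFactor_mergeLeaf_self (m v : ℕ) :
    hookFactor x (mergeLeaf y m v) m v =
      hookFactor x y m v + y v m * ∑ j ∈ range (v + 1), x j := by
  have hv : v ∉ Ico (v + 1) m := by simp
  simp only [hookFactor, mergeLeaf, Pi.add_apply, Pi.single_eq_same, sum_add_distrib,
    sum_pi_single', if_neg hv, add_zero]
  ring

lemma hookFactor_mergeLeaf_of_gt {m i v : ℕ} (hvi : v < i) (him : i < m) :
    hookFactor x (mergeLeaf y m i) m v = hookFactor x y (m + 1) v := by
  have hi : i ∈ Ico (v + 1) m := by grind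
  rw [hookFactor_succ x y (hvi.trans him)]
  simp only [hookFactor, mergeLeaf, Pi.add_apply, Pi.single_eq_of_ne hvi.ne, sum_add_distrib,
    sum_pi_single', if_pos hi, add_zero]
  ring

lemma prod_hookFactor_mergeLeaf {m i : ℕ} (him : i < m) :
    ∏ v ∈ Ico 1 i, hookFactor x (mergeLeaf y m i) m v =
      ∏ v ∈ Ico 1 i, hookFactor x y (m + 1) v :=
  prod_congr rfl fun _ hv ↦ hookFactor_mergeLeaf_of_gt x y (mem_Ico.1 hv).2 him

lemma sum_mul_prod_hookFactor_mergeLeaf {m l : ℕ} (hl : l < m) :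
    ∑ i ∈ range (l + 1), x i * ∏ v ∈ Ico 1 (l + 1), hookFactor x (mergeLeaf y m i) m v =
      (∑ i ∈ range (l + 1), x i) * ∏ v ∈ Ico 1 (l + 1), hookFactor x y (m + 1) v := by
  induction l with
  | zero => simp
  | succ l ih =>
    have hbelow : ∀ i ∈ range (l + 1),
        x i * ∏ v ∈ Ico 1 (l + 2), hookFactor x (mergeLeaf y m i) m v =
          x i * (∏ v ∈ Ico 1 (l + 1), hookFactor x (mergeLeaf y m i) m v) *
            hookFactor x y m (l + 1) := fun i hi ↦ by
      rw [prod_Ico_succ_top (by lia), hookFactor_mergeLeaf_of_lt x y (mem_range.1 hi), mul_assoc]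
    rw [sum_range_succ, sum_congr rfl hbelow, ← sum_mul, ih (by lia),
      prod_Ico_succ_top (b := l + 1) (by lia), prod_Ico_succ_top (b := l + 1) (by lia),
      prod_hookFactor_mergeLeaf x y hl, hookFactor_mergeLeaf_self, hookFactor_succ x y hl,
      sum_range_succ x (l + 1)]
    ring

theorem sum_hookWeight (n : ℕ) :
    ∑ T : {f : Fin (n + 2) → Fin (n + 2) // IsParent f}, hookWeight x y T.1 =
      x 0 * y (n + 1) (n + 1) * ∏ v ∈ Ico 1 (n + 1), hookFactor x y (n + 2) v := by
  induction n generalizing y with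
  | zero => simp [sum_hookWeight_succ, sum_hookWeight_one, mul_comm]
  | succ n ih =>
    have hbelow : ∀ i ∈ range (n + 1),
        x i * (x 0 * mergeLeaf y (n + 2) i (n + 1) (n + 1) *
            ∏ v ∈ Ico 1 (n + 1), hookFactor x (mergeLeaf y (n + 2) i) (n + 2) v) =
          x 0 * y (n + 1) (n + 1) *
            (x i * ∏ v ∈ Ico 1 (n + 1), hookFactor x (mergeLeaf y (n + 2) i) (n + 2) v) :=
      fun i hi ↦ by
        have : n + 1 ≠ i := (mem_range.1 hi).ne'
        simp only [mergeLeaf, Pi.add_apply, Pi.single_eq_of_ne this]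
        ring
    have htop : mergeLeaf y (n + 2) (n + 1) (n + 1) (n + 1) =
        y (n + 1) (n + 1) + y (n + 1) (n + 2) := by
      simp [mergeLeaf]
    have hfactor : hookFactor x y (n + 3) (n + 1) =
        y (n + 1) (n + 1) * (∑ i ∈ range (n + 1), x i + x (n + 1)) +
          x (n + 1) * y (n + 1) (n + 2) := by
      simp [hookFactor, sum_range_succ x (n + 1)]
    simp only [sum_hookWeight_succ x y (n + 1), ih]
    rw [sum_range_succ, sum_congr rfl hbelow, ← mul_sum,
      sum_mul_prod_hookFactor_mergeLeaf x y (by lia), prod_hookFactor_mergeLeaf x y (by lia), htop,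
      prod_Ico_succ_top (b := n + 1) (by lia), hfactor]
    ring

end HookWeight

section HookShift

variable {R : Type*} [CommRing R]

/-- The family `y_{v,v} = k_v`, `y_{v,u} = k_u - 1` for `u ≠ v`, whose sum over the hook of `v` is
the factor `(∑_{u ∈ 𝔥_T(v)} k_u) - h_T(v) + 1` of `wtF`. -/
def hookShift (k : ℕ → R) : ℕ → ℕ → R :=
  fun v ↦ (fun u ↦ k u - 1) + Pi.single v 1

lemma sum_hookF_hookShift (k : ℕ → R) {n : ℕ} (f : Fin n → Fin n) (v : Fin n) :
    ∑ u ∈ hookF f v, hookShift k v u = ∑ u ∈ hookF f v, k u - #(hookF f v) + 1 := by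
  simp [hookShift, sum_add_distrib, Pi.single_apply, Fin.val_inj, self_mem_hookF]

lemma hookFactor_hookShift (k : ℕ → R) {n v : ℕ} (hv : v < n) :
    hookFactor k (hookShift k) n v =
      k v * (∑ j ∈ range n, k j - ((n - (v + 1) : ℕ) : R)) := by
  have hv' : v ∉ Ico (v + 1) n := by simp
  rw [← sum_range_add_sum_Ico k hv]
  simp only [hookFactor, hookShift, Pi.add_apply, Pi.single_eq_same, sub_add_cancel,
    sum_add_distrib, sum_sub_distrib, sum_const, Nat.card_Ico, nsmul_eq_mul, mul_one,
    sum_pi_single', if_neg hv', add_zero, Nat.succ_eq_add_one]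
  ring

lemma prod_hookFactor_hookShift (k : ℕ → R) (n : ℕ) :
    ∏ v ∈ Ico 1 (n + 1), hookFactor k (hookShift k) (n + 2) v =
      (∏ v ∈ Ico 1 (n + 1), k v) * ffall (∑ j ∈ range (n + 2), k j - 1) n := by
  have hfall : ffall (∑ j ∈ range (n + 2), k j - 1) n =
      ∏ v ∈ Ico 1 (n + 1), (∑ j ∈ range (n + 2), k j - ((n + 2 - (v + 1) : ℕ) : R)) := by
    rw [ffall, ← prod_range_reflect, prod_Ico_eq_prod_range]
    refine prod_congr rfl fun i hi ↦ ?_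
    have hi' : n + 2 - (1 + i + 1) = n - 1 - i + 1 := by
      have := mem_range.1 hi
      lia
    rw [hi']
    push_cast
    ring
  rw [hfall, ← prod_mul_distrib]
  exact prod_congr rfl fun v hv ↦ hookFactor_hookShift k (by grind)

end HookShift

end IncreasingTree

open IncreasingTree

theorem stmt0_general {R : Type*} [CommRing R] (r : ℕ) (hr : 2 ≤ r) (k : Fin r → R) :
    ∑ T : {f : Fin r → Fin r // IsParent f},
        ∏ v with v.val ≠ 0,
          k (T.1 v) * ((∑ u ∈ hookF T.1 v, k u) - (#(hookF T.1 v) : R) + 1) =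
      (∏ i, k i) * ffall ((∑ i, k i) - 1) (r - 2) := by
  obtain ⟨n, rfl⟩ := Nat.exists_eq_add_of_le' hr
  obtain ⟨k, rfl⟩ := Fin.val_injective.surjective_comp_right k
  have h := sum_hookWeight k (hookShift k) n
  simp only [hookWeight, sum_hookF_hookShift, prod_hookFactor_hookShift] at h
  simp only [Function.comp_apply, ← sum_range, ← prod_range, h]
  have hprod : ∏ i ∈ range (n + 2), k i = k 0 * (∏ i ∈ Ico 1 (n + 1), k i) * k (n + 1) := by
    rw [prod_range_succ, prod_range_eq_mul_Ico _ n.succ_pos]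
  have hlast : hookShift k (n + 1) (n + 1) = k (n + 1) := by
    simp [hookShift]
  rw [hprod, hlast, Nat.add_sub_cancel]
  ring

/-- The hook formula: for `r ≥ 2`, the sum of `wt(T)` over all unordered increasing
trees on `{1, …, r}` equals `k_1 ⋯ k_r · (K − 1)_{r−2}` where `K = k_1 + ⋯ + k_r`. -/
theorem stmt0 (r : ℕ) (hr : 2 ≤ r) :
    ∑ T : {f : Fin r → Fin r // IsParent f}, wtF T.val
      = (∏ i : Fin r, MvPolynomial.X i) *
          ffall ((∑ i : Fin r, (MvPolynomial.X i : MvPolynomial (Fin r) ℚ)) - 1) (r - 2) :=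
  stmt0_general r hr MvPolynomial.X
end

section
/- Let n ≥ 2 and let μ = (μ_1 ≥ μ_2 ≥ ⋯ ≥ μ_ℓ ≥ 1) be a partition of n with ℓ parts, and set j = n − ℓ + 2. Fix a permutation σ_μ in the symmetric group S_n whose cycle type is μ. Then the number of pairs (σ_1, σ_2) of permutations in S_n such that σ_1 σ_2 = σ_μ, σ_2 is an n-cycle, and σ_1 has exactly j − 1 cycles (counting fixed points as cycles) equals (∏_{i=1}^{ℓ} μ_i) · (n−1)! / (n − ℓ + 1)!. -/
open scoped Classical

/-!
Write `π = σ * c` with `c` a long cycle. When `π` has `r + 1` cycles, the factors `σ` with `n - r`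
cycles (the largest possible number) that are supported in a set `A` are counted by
`#A * count = (∏ #(A ∩ C)) * #A * (#A - 1) * ⋯ * (#A - r + 1)`, the first product running over the
cycles `C` of `π`; the theorem is the case `A = univ`. This is proved by induction on `A`. When a
point `x` is added to `A`, either `σ` fixes `x`, or `σ x = a` for some `a ∈ A`, and then
`σ = swap x a * σ'` with `σ'` supported in `A` and `σ' * c = swap x a * π`. If `x` and `a` lie on
different cycles of `π`, the transposition joins them and the induction hypothesis applies with
`r - 1`; otherwise `swap x a * π` has at least `r + 1` cycles, and no such `σ'` exists.
-/

open Equiv Equiv.Perm Finset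

section SameCycle

variable {α : Type*} {σ π : Perm α} {x a y z : α}

theorem eq_of_sameCycle_of_apply_eq {β : Type*} {g : α → β} (hg : ∀ y, g (σ y) = g y)
    (h : σ.SameCycle y z) : g y = g z := by
  obtain ⟨i, rfl⟩ := h
  induction i generalizing y with
  | zero => rfl
  | succ i ih => rw [zpow_add_one, Perm.mul_apply, ← ih, hg]
  | pred i ih => rw [zpow_sub_one, Perm.mul_apply, ← ih, ← hg (σ⁻¹ y), coe_inv, apply_symm_apply]

variable [DecidableEq α]

theorem sameCycle_of_sameCycle_swap_mul (h : π.SameCycle x a)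
    (hyz : (swap x a * π).SameCycle y z) : π.SameCycle y z := by
  refine (eq_of_sameCycle_of_apply_eq (g := π.SameCycle y) (fun w ↦ ?_) hyz).mp (.refl π y)
  have hxa : π.SameCycle y x = π.SameCycle y a := propext ⟨(·.trans h), (·.trans h.symm)⟩
  rw [Perm.mul_apply, apply_swap_eq_self hxa, sameCycle_apply_right]

theorem sameCycle_swap_mul_of_pow_apply_eq (h : ¬π.SameCycle x a) {k : ℕ}
    (hk : (π ^ (k + 1)) y = x) : (swap x a * π).SameCycle y a := by
  induction k generalizing y with
  | zero =>
    rw [zero_add, pow_one] at hk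
    rw [← sameCycle_apply_left, Perm.mul_apply, hk, swap_apply_left]
  | succ k ih =>
    rw [pow_succ, Perm.mul_apply] at hk
    rw [← sameCycle_apply_left, Perm.mul_apply]
    rcases eq_or_ne (π y) x with hx | hx
    · rw [hx, swap_apply_left]
    have ha : π y ≠ a := fun ha ↦ h (by rw [← hk, ha]; exact sameCycle_pow_left.2 (.refl _ _))
    rw [swap_apply_of_ne_of_ne hx ha]
    exact ih hk

variable [Finite α]

theorem sameCycle_swap_mul_self (h : ¬π.SameCycle x a) : (swap x a * π).SameCycle x a := by
  obtain ⟨k, hk, -, hx⟩ := (SameCycle.refl π x).exists_pow_eq''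
  obtain ⟨k, rfl⟩ := Nat.exists_eq_add_one_of_ne_zero hk.ne'
  exact sameCycle_swap_mul_of_pow_apply_eq h hx

theorem sameCycle_swap_mul_of_sameCycle (h : ¬π.SameCycle x a) (hyz : π.SameCycle y z) :
    (swap x a * π).SameCycle y z :=
  sameCycle_of_sameCycle_swap_mul (sameCycle_swap_mul_self h) (by rwa [swap_mul_self_mul])

theorem sameCycle_swap_mul_iff (h : ¬π.SameCycle x a) :
    (swap x a * π).SameCycle y z ↔ π.SameCycle y z ∨
      (π.SameCycle x y ∨ π.SameCycle a y) ∧ (π.SameCycle x z ∨ π.SameCycle a z) := by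
  have join : (swap x a * π).SameCycle x a := sameCycle_swap_mul_self h
  have lift {u v : α} : π.SameCycle u v → (swap x a * π).SameCycle u v :=
    sameCycle_swap_mul_of_sameCycle h
  constructor
  · intro hyz
    let g (w : α) : Prop := π.SameCycle y w ∨
      (π.SameCycle x y ∨ π.SameCycle a y) ∧ (π.SameCycle x w ∨ π.SameCycle a w)
    have hxa : g x = g a := by
      simp only [g, sameCycle_comm (x := y), SameCycle.refl, true_or, or_true, and_true,
        or_self_left, eq_iff_iff]
      tauto
    refine (eq_of_sameCycle_of_apply_eq (g := g) (fun w ↦ ?_) hyz).mp (.inl (.refl π y))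
    rw [Perm.mul_apply, apply_swap_eq_self hxa]
    simp only [g, sameCycle_apply_right]
  · have join_x {w : α} : π.SameCycle x w ∨ π.SameCycle a w → (swap x a * π).SameCycle x w :=
      fun hw ↦ hw.elim lift fun ha ↦ join.trans (lift ha)
    rintro (hyz | ⟨hy, hz⟩)
    · exact lift hyz
    · exact (join_x hy).symm.trans (join_x hz)

end SameCycle

section CyclePartition

variable {α : Type*} [Fintype α] [DecidableEq α]

/-- The partition of `α` into the cycles of `σ`, with a singleton for each fixed point. -/
noncomputable def cyclePartition (σ : Perm α) : Finpartition (univ : Finset α) :=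
  Finpartition.ofSetoid (SameCycle.setoid σ)

/-- The number of cycles of `σ`, fixed points included. -/
noncomputable def cycleCount (σ : Perm α) : ℕ := #(cyclePartition σ).parts

/-- The number of ways of choosing one element of `A` from each cycle of `σ`. -/
noncomputable def cycleWeight (σ : Perm α) (A : Finset α) : ℕ :=
  ∏ c ∈ (cyclePartition σ).parts, #(A ∩ c)

variable {σ π : Perm α} {x a y z : α}

theorem mem_part_cyclePartition : z ∈ (cyclePartition σ).part y ↔ σ.SameCycle y z :=
  Finpartition.mem_part_ofSetoid_iff_rel

theorem mem_parts_iff_exists_part_eq {P : Finpartition (univ : Finset α)} {c : Finset α} :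
    c ∈ P.parts ↔ ∃ y, P.part y = c := by
  constructor
  · intro hc
    obtain ⟨y, hy⟩ := P.nonempty_of_mem_parts hc
    exact ⟨y, P.part_eq_of_mem hc hy⟩
  · rintro ⟨y, rfl⟩
    exact P.part_mem.2 (mem_univ y)

theorem part_cyclePartition_eq_iff :
    (cyclePartition σ).part y = (cyclePartition σ).part z ↔ σ.SameCycle y z := by
  rw [← Finpartition.mem_part_iff_part_eq_part _ (mem_univ y) (mem_univ z),
    mem_part_cyclePartition, sameCycle_comm]

theorem sum_sdiff_eq_sum_parts_erase {ι M : Type*} [DecidableEq ι] [AddCommMonoid M]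
    {s A p : Finset ι} (P : Finpartition s) (hA : A ⊆ s) (hp : p ∈ P.parts) (F : ι → M) :
    ∑ i ∈ A \ p, F i = ∑ c ∈ P.parts.erase p, ∑ i ∈ A ∩ c, F i := by
  have maps_to (i) (hi : i ∈ A \ p) : P.part i ∈ P.parts.erase p := by
    obtain ⟨hiA, hip⟩ := mem_sdiff.1 hi
    exact mem_erase.2 ⟨fun h ↦ hip ((P.part_eq_iff_mem hp).1 h), P.part_mem.2 (hA hiA)⟩
  rw [← sum_fiberwise_of_maps_to maps_to]
  refine sum_congr rfl fun c hc ↦ sum_congr ?_ fun _ _ ↦ rfl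
  obtain ⟨hne, hcP⟩ := mem_erase.1 hc
  have hdisj : Disjoint c p := P.disjoint hcP hp hne
  simp only [P.part_eq_iff_mem hcP, filter_mem_eq_inter, sdiff_inter_right_comm]
  rw [inter_sdiff_assoc, sdiff_eq_self_of_disjoint hdisj]

theorem cyclePartition_swap_mul_le (h : π.SameCycle x a) :
    cyclePartition (swap x a * π) ≤ cyclePartition π := by
  intro c hc
  obtain ⟨y, rfl⟩ := mem_parts_iff_exists_part_eq.1 hc
  refine ⟨(cyclePartition π).part y, Finpartition.part_mem _ |>.2 (mem_univ y), fun z hz ↦ ?_⟩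
  rw [mem_part_cyclePartition] at hz ⊢
  exact sameCycle_of_sameCycle_swap_mul h hz

theorem cycleCount_ne_zero [Nonempty α] (σ : Perm α) : cycleCount σ ≠ 0 :=
  ((cyclePartition σ).parts_nonempty univ_nonempty.ne_empty).card_ne_zero

theorem cycleCount_le_card (σ : Perm α) : cycleCount σ ≤ Fintype.card α :=
  (cyclePartition σ).card_parts_le_card

theorem cycleCount_le_cycleCount_swap_mul (h : π.SameCycle x a) :
    cycleCount π ≤ cycleCount (swap x a * π) :=
  Finpartition.card_mono (cyclePartition_swap_mul_le h)

theorem part_cyclePartition_swap_mul (h : ¬π.SameCycle x a) (y : α) :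
    (cyclePartition (swap x a * π)).part y =
      if π.SameCycle x y ∨ π.SameCycle a y then
        (cyclePartition π).part x ∪ (cyclePartition π).part a
      else (cyclePartition π).part y := by
  split_ifs with hy
  · ext z
    rw [mem_part_cyclePartition, sameCycle_swap_mul_iff h, mem_union, mem_part_cyclePartition,
      mem_part_cyclePartition, and_iff_right hy, or_iff_right_iff_imp]
    exact fun hyz ↦ hy.imp (·.trans hyz) (·.trans hyz)
  · ext z
    rw [mem_part_cyclePartition, sameCycle_swap_mul_iff h, mem_part_cyclePartition]
    simp only [hy, false_and, or_false]

theorem parts_cyclePartition_swap_mul (h : ¬π.SameCycle x a) :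
    (cyclePartition (swap x a * π)).parts =
      insert ((cyclePartition π).part x ∪ (cyclePartition π).part a)
        (((cyclePartition π).parts.erase ((cyclePartition π).part x)).erase
          ((cyclePartition π).part a)) := by
  ext c
  simp only [mem_insert, mem_erase, mem_parts_iff_exists_part_eq, part_cyclePartition_swap_mul h]
  constructor
  · rintro ⟨y, rfl⟩
    split_ifs with hy
    · exact .inl rfl
    · rw [not_or] at hy
      exact .inr ⟨fun e ↦ hy.2 (part_cyclePartition_eq_iff.1 e.symm),
        fun e ↦ hy.1 (part_cyclePartition_eq_iff.1 e.symm), y, rfl⟩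
  · rintro (rfl | ⟨ha, hx, y, rfl⟩)
    · exact ⟨x, if_pos (.inl (.refl π x))⟩
    · refine ⟨y, if_neg (not_or.2 ⟨fun hy ↦ hx ?_, fun hy ↦ ha ?_⟩)⟩ <;>
        exact part_cyclePartition_eq_iff.2 hy.symm

theorem union_part_notMem_parts_cyclePartition (h : ¬π.SameCycle x a) :
    (cyclePartition π).part x ∪ (cyclePartition π).part a ∉ (cyclePartition π).parts := by
  intro hmem
  have hx : x ∈ (cyclePartition π).part x ∪ (cyclePartition π).part a := by simp
  have ha : a ∈ (cyclePartition π).part x ∪ (cyclePartition π).part a := by simp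
  exact h (part_cyclePartition_eq_iff.1 <|
    (Finpartition.part_eq_of_mem _ hmem hx).trans (Finpartition.part_eq_of_mem _ hmem ha).symm)

theorem part_cyclePartition_mem_erase_part (h : ¬π.SameCycle x a) :
    (cyclePartition π).part a ∈
      (cyclePartition π).parts.erase ((cyclePartition π).part x) :=
  mem_erase.2 ⟨fun e ↦ h (part_cyclePartition_eq_iff.1 e.symm),
    (Finpartition.part_mem _).2 (mem_univ a)⟩

theorem cycleCount_swap_mul_add_one (h : ¬π.SameCycle x a) :
    cycleCount (swap x a * π) + 1 = cycleCount π := by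
  rw [cycleCount, parts_cyclePartition_swap_mul h, card_insert_of_notMem,
    card_erase_add_one (part_cyclePartition_mem_erase_part h), card_erase_add_one, cycleCount]
  · exact (Finpartition.part_mem _).2 (mem_univ x)
  · exact fun hmem ↦ union_part_notMem_parts_cyclePartition h
      (mem_of_mem_erase (mem_of_mem_erase hmem))

theorem cycleCount_le_cycleCount_swap_mul_add_one (π : Perm α) (x a : α) :
    cycleCount π ≤ cycleCount (swap x a * π) + 1 := by
  by_cases h : π.SameCycle x a
  · exact (cycleCount_le_cycleCount_swap_mul h).trans (Nat.le_succ _)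
  · exact (cycleCount_swap_mul_add_one h).ge

/-- The number of ways of choosing one element of `A` from each cycle of `σ` other than that of
`x`. -/
noncomputable def cycleWeightErase (σ : Perm α) (A : Finset α) (x : α) : ℕ :=
  ∏ c ∈ (cyclePartition σ).parts.erase ((cyclePartition σ).part x), #(A ∩ c)

theorem card_inter_part_mul_cycleWeightErase (σ : Perm α) (A : Finset α) (x : α) :
    #(A ∩ (cyclePartition σ).part x) * cycleWeightErase σ A x = cycleWeight σ A :=
  mul_prod_erase _ (fun c ↦ #(A ∩ c)) ((Finpartition.part_mem _).2 (mem_univ x))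

theorem cycleWeight_insert (σ : Perm α) {A : Finset α} (hx : x ∉ A) :
    cycleWeight σ (insert x A) =
      (#(A ∩ (cyclePartition σ).part x) + 1) * cycleWeightErase σ A x := by
  rw [← card_inter_part_mul_cycleWeightErase σ _ x, insert_inter_of_mem (by simp),
    card_insert_of_notMem (by simp [hx]), cycleWeightErase, cycleWeightErase]
  congr 1
  refine prod_congr rfl fun c hc ↦ ?_
  obtain ⟨hne, hc⟩ := mem_erase.1 hc
  rw [insert_inter_of_notMem fun hxc ↦ hne (Finpartition.part_eq_of_mem _ hc hxc).symm]

theorem cycleWeight_swap_mul (h : ¬π.SameCycle x a) (A : Finset α) :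
    cycleWeight (swap x a * π) A =
      (#(A ∩ (cyclePartition π).part x) + #(A ∩ (cyclePartition π).part a)) *
        ∏ c ∈ ((cyclePartition π).parts.erase ((cyclePartition π).part x)).erase
          ((cyclePartition π).part a), #(A ∩ c) := by
  have hdisj : Disjoint ((cyclePartition π).part x) ((cyclePartition π).part a) := by
    refine disjoint_left.2 fun z hx ha ↦ h ?_
    rw [mem_part_cyclePartition] at hx ha
    exact hx.trans ha.symm
  rw [cycleWeight, parts_cyclePartition_swap_mul h, prod_insert, inter_union_distrib_left,
    card_union_of_disjoint (hdisj.mono inter_subset_right inter_subset_right)]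
  exact fun hmem ↦ union_part_notMem_parts_cyclePartition h
    (mem_of_mem_erase (mem_of_mem_erase hmem))

theorem sum_cycleWeight_swap_mul {s : ℕ} (hπ : cycleCount π = s + 2) (A : Finset α) (x : α) :
    ∑ a ∈ A \ (cyclePartition π).part x, cycleWeight (swap x a * π) A =
      cycleWeightErase π A x * (s * #(A ∩ (cyclePartition π).part x) + #A) := by
  set P := cyclePartition π
  have hx : P.part x ∈ P.parts := P.part_mem.2 (mem_univ x)
  set m := #(A ∩ P.part x)
  have sum_part : ∀ c ∈ P.parts.erase (P.part x),
      ∑ a ∈ A ∩ c, cycleWeight (swap x a * π) A = cycleWeightErase π A x * (m + #(A ∩ c)) := by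
    intro c hc
    obtain ⟨hne, hcP⟩ := mem_erase.1 hc
    have weight (a) (ha : a ∈ A ∩ c) : cycleWeight (swap x a * π) A =
        (m + #(A ∩ c)) * ∏ d ∈ (P.parts.erase (P.part x)).erase c, #(A ∩ d) := by
      have hac : P.part a = c := P.part_eq_of_mem hcP (mem_inter.1 ha).2
      rw [cycleWeight_swap_mul, hac]
      exact fun h ↦ hne (hac.symm.trans (part_cyclePartition_eq_iff.2 h.symm))
    rw [sum_congr rfl weight, sum_const, smul_eq_mul, cycleWeightErase,
      ← mul_prod_erase _ (fun d ↦ #(A ∩ d)) hc]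
    ring
  have card_erase : #(P.parts.erase (P.part x)) = s + 1 := by
    rw [card_erase_of_mem hx]
    exact Nat.sub_eq_of_eq_add hπ
  have sum_card : ∑ c ∈ P.parts.erase (P.part x), #(A ∩ c) = #(A \ P.part x) := by
    simp only [card_eq_sum_ones, sum_sdiff_eq_sum_parts_erase P (subset_univ A) hx]
  rw [sum_sdiff_eq_sum_parts_erase P (subset_univ A) hx, sum_congr rfl sum_part, ← mul_sum,
    sum_add_distrib, sum_const, card_erase, sum_card, ← card_inter_add_card_sdiff A (P.part x)]
  simp only [smul_eq_mul, m]
  ring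

end CyclePartition

section CycleType

variable {α : Type*} [Fintype α] [DecidableEq α] {σ : Perm α} {y : α}

theorem part_cyclePartition_of_mem_support (hy : y ∈ σ.support) :
    (cyclePartition σ).part y = (σ.cycleOf y).support := by
  ext z
  rw [mem_part_cyclePartition, mem_support_cycleOf_iff, and_iff_left hy]

theorem part_cyclePartition_of_notMem_support (hy : y ∉ σ.support) :
    (cyclePartition σ).part y = {y} := by
  ext z
  rw [mem_part_cyclePartition, mem_singleton]
  refine ⟨fun h ↦ (h.eq_of_left (notMem_support.1 hy)).symm, ?_⟩
  rintro rfl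
  exact .refl σ z

theorem disjoint_image_support_cycleFactorsFinset (σ : Perm α) :
    Disjoint (σ.cycleFactorsFinset.image support) (σ.supportᶜ.image singleton) := by
  refine disjoint_left.2 fun c hc hc' ↦ ?_
  obtain ⟨τ, hτ, rfl⟩ := mem_image.1 hc
  obtain ⟨y, hy, hyτ⟩ := mem_image.1 hc'
  refine mem_compl.1 hy (mem_cycleFactorsFinset_support_le hτ ?_)
  rw [← hyτ]
  exact mem_singleton_self y

theorem parts_cyclePartition (σ : Perm α) :
    (cyclePartition σ).parts = (σ.cycleFactorsFinset.image support).disjUnion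
      (σ.supportᶜ.image singleton) (disjoint_image_support_cycleFactorsFinset σ) := by
  ext c
  simp only [disjUnion_eq_union, mem_union, mem_image, mem_compl, mem_parts_iff_exists_part_eq]
  constructor
  · rintro ⟨y, rfl⟩
    by_cases hy : y ∈ σ.support
    · exact .inl ⟨σ.cycleOf y, cycleOf_mem_cycleFactorsFinset_iff.2 hy,
        (part_cyclePartition_of_mem_support hy).symm⟩
    · exact .inr ⟨y, hy, (part_cyclePartition_of_notMem_support hy).symm⟩
  · rintro (⟨τ, hτ, rfl⟩ | ⟨y, hy, rfl⟩)
    · obtain ⟨y, hy⟩ := (mem_cycleFactorsFinset_iff.1 hτ).1.nonempty_support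
      refine ⟨y, ?_⟩
      rw [cycle_is_cycleOf hy hτ]
      exact part_cyclePartition_of_mem_support (mem_cycleFactorsFinset_support_le hτ hy)
    · exact ⟨y, part_cyclePartition_of_notMem_support hy⟩

theorem partition_parts_eq_map_card (σ : Perm α) :
    σ.partition.parts = (cyclePartition σ).parts.val.map card := by
  have support_injOn : Set.InjOn support (σ.cycleFactorsFinset : Set (Perm α)) := by
    intro τ hτ τ' hτ' h
    obtain ⟨y, hy⟩ := (mem_cycleFactorsFinset_iff.1 hτ).1.nonempty_support
    rw [cycle_is_cycleOf hy hτ, cycle_is_cycleOf (h ▸ hy) hτ']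
  rw [parts_cyclePartition, disjUnion_val, Multiset.map_add,
    image_val_of_injOn support_injOn, image_val_of_injOn (singleton_injective.injOn),
    Multiset.map_map, Multiset.map_map, parts_partition, cycleType_def]
  simp only [Function.comp_def, card_singleton, Multiset.map_const', card_val, card_compl]

theorem card_partition_parts (σ : Perm α) : σ.partition.parts.card = cycleCount σ := by
  rw [partition_parts_eq_map_card, Multiset.card_map, card_val, cycleCount]

theorem prod_partition_parts (σ : Perm α) : σ.partition.parts.prod = cycleWeight σ univ := by
  simp only [partition_parts_eq_map_card, cycleWeight, univ_inter, prod_map_val]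

theorem cycleCount_add_card_support (σ : Perm α) :
    cycleCount σ + #σ.support = σ.cycleType.card + Fintype.card α := by
  rw [← card_partition_parts, parts_partition, Multiset.card_add, Multiset.card_replicate,
    add_assoc, Nat.sub_add_cancel (card_le_univ _)]

theorem two_mul_card_cycleType_le (σ : Perm α) : 2 * σ.cycleType.card ≤ #σ.support := by
  rw [← sum_cycleType, mul_comm, ← smul_eq_mul]
  exact Multiset.card_nsmul_le_sum fun _ ↦ two_le_of_mem_cycleType

theorem cycleCount_eq_card_iff : cycleCount σ = Fintype.card α ↔ σ = 1 := by
  have := cycleCount_add_card_support σ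
  have := two_mul_card_cycleType_le σ
  rw [← card_cycleType_eq_zero]
  constructor
  · omega
  · intro h
    have : #σ.support = 0 := by rw [card_support_eq_zero, ← card_cycleType_eq_zero, h]
    omega

theorem cycleCount_eq_one_iff (hα : 2 ≤ Fintype.card α) :
    cycleCount σ = 1 ↔ σ.IsCycle ∧ #σ.support = Fintype.card α := by
  have hcount := cycleCount_add_card_support σ
  have hsupport : #σ.support ≤ Fintype.card α := card_le_univ _
  rw [← card_cycleType_eq_one]
  constructor
  · intro h
    have : σ.cycleType.card ≠ 0 := fun h0 ↦ by
      rw [card_cycleType_eq_zero] at h0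
      have := cycleCount_eq_card_iff.2 h0
      omega
    omega
  · omega

end CycleType

theorem descFactorial_succ_add_mul (N s : ℕ) :
    N.descFactorial (s + 1) + s * N.descFactorial s = N * N.descFactorial s := by
  rcases le_or_gt s N with h | h
  · rw [Nat.descFactorial_succ, ← add_mul, Nat.sub_add_cancel h]
  · simp only [Nat.descFactorial_of_lt h, Nat.descFactorial_of_lt (h.trans (Nat.lt_succ_self s)),
      mul_zero, add_zero]

section LongCycleFactors

variable {α : Type*} [Fintype α] [DecidableEq α] {A : Finset α} {σ π : Perm α} {x a : α} {r : ℕ}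

/-- The left factors `σ` of the factorizations `π = σ * c` in which `c` is a long cycle (a
permutation with exactly one cycle) and `σ`, supported in `A`, has `Fintype.card α - r` cycles. -/
noncomputable def longCycleFactors (A : Finset α) (π : Perm α) (r : ℕ) : Finset (Perm α) :=
  {σ | σ.support ⊆ A ∧ cycleCount σ + r = Fintype.card α ∧ cycleCount (σ⁻¹ * π) = 1}

theorem mem_longCycleFactors : σ ∈ longCycleFactors A π r ↔
    σ.support ⊆ A ∧ cycleCount σ + r = Fintype.card α ∧ cycleCount (σ⁻¹ * π) = 1 := by
  simp only [longCycleFactors, mem_filter_univ]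

theorem longCycleFactors_zero (A : Finset α) (π : Perm α) :
    longCycleFactors A π 0 = if cycleCount π = 1 then {1} else ∅ := by
  ext σ
  rw [mem_longCycleFactors, add_zero, cycleCount_eq_card_iff]
  split_ifs with hπ
  · rw [mem_singleton]
    refine ⟨fun h ↦ h.2.1, ?_⟩
    rintro rfl
    simpa using hπ
  · refine iff_of_false ?_ (notMem_empty σ)
    rintro ⟨-, rfl, h⟩
    exact hπ (by simpa using h)

theorem longCycleFactors_empty_succ (π : Perm α) (r : ℕ) :
    longCycleFactors ∅ π (r + 1) = ∅ := by
  refine eq_empty_of_forall_notMem fun σ hσ ↦ ?_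
  obtain ⟨hsupp, hcount, -⟩ := mem_longCycleFactors.1 hσ
  have := cycleCount_eq_card_iff.2 (support_eq_empty_iff.1 (subset_empty.1 hsupp))
  omega

theorem support_subset_iff_subset_insert_and_apply_eq (hx : x ∉ A) :
    σ.support ⊆ A ↔ σ.support ⊆ insert x A ∧ σ x = x := by
  constructor
  · exact fun h ↦ ⟨h.trans (subset_insert x A), notMem_support.1 fun hxσ ↦ hx (h hxσ)⟩
  · rintro ⟨h, hxσ⟩
    exact (subset_insert_iff_of_notMem (notMem_support.2 hxσ)).1 h

theorem filter_longCycleFactors_insert_apply_eq_self (hx : x ∉ A) :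
    {σ ∈ longCycleFactors (insert x A) π r | σ x = x} = longCycleFactors A π r := by
  ext σ
  rw [mem_filter, mem_longCycleFactors, mem_longCycleFactors,
    support_subset_iff_subset_insert_and_apply_eq hx, and_right_comm]

theorem support_swap_mul_subset_iff {B : Finset α} (hx : x ∈ B) (ha : a ∈ B) :
    (swap x a * σ).support ⊆ B ↔ σ.support ⊆ B := by
  have swap_mul {τ : Perm α} (h : τ.support ⊆ B) : (swap x a * τ).support ⊆ B := by
    refine (support_mul_le _ _).trans (union_subset (fun y hy ↦ ?_) h)
    by_contra hyB
    refine mem_support.1 hy (swap_apply_of_ne_of_ne ?_ ?_) <;> (rintro rfl; contradiction)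
  exact ⟨fun h ↦ by simpa only [swap_mul_self_mul] using swap_mul h, swap_mul⟩

theorem swap_mul_mem_longCycleFactors_insert_iff (hx : x ∉ A) (ha : a ∈ A) :
    swap x a * σ ∈ longCycleFactors (insert x A) π (r + 1) ∧ (swap x a * σ) x = a ↔
      σ ∈ longCycleFactors A (swap x a * π) r := by
  have apply_eq : (swap x a * σ) x = a ↔ σ x = x := by
    rw [Perm.mul_apply, swap_apply_eq_iff, swap_apply_right]
  have inv_mul : (swap x a * σ)⁻¹ * π = σ⁻¹ * (swap x a * π) := by
    rw [mul_inv_rev, swap_inv, mul_assoc]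
  rw [mem_longCycleFactors, mem_longCycleFactors, apply_eq, inv_mul,
    support_swap_mul_subset_iff (mem_insert_self x A) (mem_insert_of_mem ha),
    support_subset_iff_subset_insert_and_apply_eq hx, and_right_comm]
  refine and_congr_right fun ⟨_, hσx⟩ ↦ and_congr_left fun _ ↦ ?_
  have not_sameCycle : ¬σ.SameCycle x a := fun h ↦ hx (h.eq_of_left hσx ▸ ha)
  rw [← cycleCount_swap_mul_add_one not_sameCycle]
  omega

theorem card_longCycleFactors_insert (hx : x ∉ A) (π : Perm α) (r : ℕ) :
    #(longCycleFactors (insert x A) π (r + 1)) =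
      #(longCycleFactors A π (r + 1)) + ∑ a ∈ A, #(longCycleFactors A (swap x a * π) r) := by
  have maps_to : ∀ σ ∈ longCycleFactors (insert x A) π (r + 1), σ x ∈ insert x A := by
    intro σ hσ
    by_cases hσx : σ x = x
    · rw [hσx]
      exact mem_insert_self x A
    · exact (mem_longCycleFactors.1 hσ).1 (apply_mem_support.2 (mem_support.2 hσx))
  rw [card_eq_sum_card_fiberwise maps_to, sum_insert hx,
    filter_longCycleFactors_insert_apply_eq_self hx]
  refine congrArg _ (sum_congr rfl fun a ha ↦ ?_)
  refine (card_equiv (Equiv.mulLeft (swap x a)) fun σ ↦ ?_).symm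
  rw [mem_filter, coe_mulLeft, swap_mul_mem_longCycleFactors_insert_iff hx ha]

theorem longCycleFactors_eq_empty (A : Finset α) (h : r + 1 < cycleCount π) :
    longCycleFactors A π r = ∅ := by
  induction A using Finset.induction_on generalizing r π with
  | empty =>
    cases r with
    | zero => rw [longCycleFactors_zero, if_neg (by omega)]
    | succ r => exact longCycleFactors_empty_succ π r
  | insert x A hx ih =>
    cases r with
    | zero => rw [longCycleFactors_zero, if_neg (by omega)]
    | succ r =>
      rw [← card_eq_zero, card_longCycleFactors_insert hx, ih h, card_empty, zero_add]
      refine sum_eq_zero fun a _ ↦ ?_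
      have := cycleCount_le_cycleCount_swap_mul_add_one π x a
      rw [ih (by omega), card_empty]

theorem sum_card_longCycleFactors_swap_mul (hπ : r + 1 < cycleCount π) (A : Finset α) (x : α) :
    ∑ a ∈ A, #(longCycleFactors A (swap x a * π) r) =
      ∑ a ∈ A \ (cyclePartition π).part x, #(longCycleFactors A (swap x a * π) r) := by
  refine (sum_subset sdiff_subset fun a ha hax ↦ ?_).symm
  have same : π.SameCycle x a := mem_part_cyclePartition.1 (by simpa [ha] using hax)
  rw [longCycleFactors_eq_empty A (hπ.trans_le (cycleCount_le_cycleCount_swap_mul same)),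
    card_empty]

theorem cycleWeight_of_cycleCount_eq_one (hπ : cycleCount π = 1) (A : Finset α) :
    cycleWeight π A = #A := by
  obtain ⟨c, hc⟩ := card_eq_one.1 hπ
  have hsup := (cyclePartition π).sup_parts
  rw [hc, sup_singleton, id] at hsup
  rw [cycleWeight, hc, prod_singleton, hsup, inter_univ]

theorem cycleWeightErase_empty (hπ : 1 < cycleCount π) (x : α) :
    cycleWeightErase π ∅ x = 0 := by
  obtain ⟨c, hc⟩ := (one_lt_card_iff_nontrivial.1 hπ).erase_nonempty
    (a := (cyclePartition π).part x)
  exact prod_eq_zero hc (by rw [empty_inter, card_empty])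

theorem card_longCycleFactors_insert_of_card_mul {s : ℕ} (hx : x ∉ A)
    (ih : ∀ (τ : Perm α) (r : ℕ), cycleCount τ = r + 1 →
      #A * #(longCycleFactors A τ r) = cycleWeight τ A * (#A).descFactorial r)
    (hπ : cycleCount π = s + 2) :
    #(longCycleFactors (insert x A) π (s + 1)) =
      (#(A ∩ (cyclePartition π).part x) + 1) * cycleWeightErase π A x *
        (#A).descFactorial s := by
  rcases A.eq_empty_or_nonempty with rfl | hA
  · rw [card_longCycleFactors_insert hx, longCycleFactors_empty_succ, card_empty, sum_empty,
      add_zero, cycleWeightErase_empty (by omega), mul_zero, zero_mul]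
  refine Nat.eq_of_mul_eq_mul_left hA.card_pos ?_
  have joined : ∀ a ∈ A \ (cyclePartition π).part x,
      #A * #(longCycleFactors A (swap x a * π) s) =
        cycleWeight (swap x a * π) A * (#A).descFactorial s := by
    intro a ha
    have h : ¬π.SameCycle x a := fun h ↦ (mem_sdiff.1 ha).2 (mem_part_cyclePartition.2 h)
    have := cycleCount_swap_mul_add_one h
    exact ih _ _ (by omega)
  rw [card_longCycleFactors_insert hx, sum_card_longCycleFactors_swap_mul (by omega), mul_add,
    ih π (s + 1) hπ, mul_sum, sum_congr rfl joined, ← sum_mul, sum_cycleWeight_swap_mul hπ,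
    ← card_inter_part_mul_cycleWeightErase π A x]
  linear_combination #(A ∩ (cyclePartition π).part x) * cycleWeightErase π A x *
    descFactorial_succ_add_mul (#A) s

theorem card_mul_card_longCycleFactors (A : Finset α) (hπ : cycleCount π = r + 1) :
    #A * #(longCycleFactors A π r) = cycleWeight π A * (#A).descFactorial r := by
  induction A using Finset.induction_on generalizing r π with
  | empty =>
    cases r with
    | zero =>
      rw [cycleWeight_of_cycleCount_eq_one hπ, card_empty, zero_mul, zero_mul]
    | succ r => rw [card_empty, zero_mul, Nat.zero_descFactorial_succ, mul_zero]
  | insert x A hx ih =>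
    cases r with
    | zero =>
      rw [longCycleFactors_zero, if_pos hπ, cycleWeight_of_cycleCount_eq_one hπ, card_singleton,
        Nat.descFactorial_zero]
    | succ s =>
      rw [card_longCycleFactors_insert_of_card_mul hx (fun τ r ↦ ih) hπ, cycleWeight_insert π hx,
        card_insert_of_notMem hx, Nat.succ_descFactorial_succ]
      ring

theorem card_factorizations_eq_card_longCycleFactors (hα : 2 ≤ Fintype.card α) {k : ℕ}
    (hk : k + r = Fintype.card α) (π : Perm α) :
    Fintype.card {p : Perm α × Perm α // p.1 * p.2 = π ∧ p.2.IsCycle ∧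
        #p.2.support = Fintype.card α ∧ p.1.partition.parts.card = k} =
      #(longCycleFactors univ π r) := by
  rw [Fintype.card_subtype]
  refine card_bij' (fun p _ ↦ p.1) (fun σ _ ↦ (σ, σ⁻¹ * π)) ?_ ?_ ?_ fun _ _ ↦ rfl
  · rintro ⟨σ, c⟩ hp
    obtain ⟨rfl, hc, hsupp, rfl⟩ := (mem_filter_univ _).1 hp
    rw [mem_longCycleFactors, inv_mul_cancel_left, ← card_partition_parts]
    exact ⟨subset_univ _, hk, (cycleCount_eq_one_iff hα).2 ⟨hc, hsupp⟩⟩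
  · intro σ hσ
    obtain ⟨-, hcount, hlong⟩ := mem_longCycleFactors.1 hσ
    obtain ⟨hc, hsupp⟩ := (cycleCount_eq_one_iff hα).1 hlong
    refine (mem_filter_univ _).2 ⟨mul_inv_cancel_left σ π, hc, hsupp, ?_⟩
    exact (card_partition_parts σ).trans (by omega)
  · rintro ⟨σ, c⟩ hp
    obtain ⟨rfl, -⟩ := (mem_filter_univ _).1 hp
    rw [inv_mul_cancel_left]

theorem card_longCycleFactors_univ_mul_factorial [Nonempty α] (hπ : cycleCount π = r + 1) :
    #(longCycleFactors univ π r) * (Fintype.card α - r).factorial =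
      cycleWeight π univ * (Fintype.card α - 1).factorial := by
  have hr : r ≤ Fintype.card α := by
    have := cycleCount_le_card π
    omega
  refine Nat.eq_of_mul_eq_mul_left (Fintype.card_pos (α := α)) ?_
  rw [← mul_assoc, ← card_univ, card_mul_card_longCycleFactors univ hπ, card_univ, mul_left_comm,
    Nat.mul_factorial_pred Fintype.card_ne_zero, ← Nat.factorial_mul_descFactorial hr]
  ring

end LongCycleFactors

theorem stmt9_general {α : Type*} [Fintype α] [DecidableEq α] (hα : 2 ≤ Fintype.card α)
    (π : Perm α) :
    (Fintype.card {p : Perm α × Perm α // p.1 * p.2 = π ∧ p.2.IsCycle ∧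
        #p.2.support = Fintype.card α ∧
          p.1.partition.parts.card = Fintype.card α - π.partition.parts.card + 1} : ℚ) =
      π.partition.parts.prod * (Fintype.card α - 1).factorial /
        (Fintype.card α - π.partition.parts.card + 1).factorial := by
  have : Nonempty α := Fintype.card_pos_iff.1 (by omega)
  obtain ⟨r, hr⟩ := Nat.exists_eq_add_one_of_ne_zero (cycleCount_ne_zero π)
  have hle : cycleCount π ≤ Fintype.card α := cycleCount_le_card π
  rw [prod_partition_parts, card_partition_parts, hr,
    card_factorizations_eq_card_longCycleFactors hα (r := r) (by omega), eq_div_iff (by positivity),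
    show Fintype.card α - (r + 1) + 1 = Fintype.card α - r by omega]
  exact_mod_cast card_longCycleFactors_univ_mul_factorial hr

/-- Bédard–Goupil / Biane / Rattan–Śniady count: let `μ = (μ_1 ≥ ⋯ ≥ μ_ℓ ≥ 1)` be a
partition of `n ≥ 2` with `ℓ` parts, `j = n − ℓ + 2`, and let `σ_μ ∈ S_n` have cycle
type `μ` (its cycle partition, fixed points included, is the multiset of parts of `μ`).
Then the number of pairs `(σ₁, σ₂)` of permutations with `σ₁σ₂ = σ_μ`, `σ₂` an
`n`-cycle, and `σ₁` having exactly `j − 1` cycles (fixed points counted as cycles),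
equals `(∏_i μ_i) · (n−1)! / (n−ℓ+1)!`. -/
theorem stmt9 (n : ℕ) (hn : 2 ≤ n) (l : ℕ) (μ : Fin l → ℕ)
    (hmono : Antitone μ) (hpos : ∀ i, 1 ≤ μ i) (hsum : ∑ i, μ i = n)
    (σμ : Equiv.Perm (Fin n))
    (hσ : σμ.partition.parts = (List.ofFn μ : Multiset ℕ)) :
    (Fintype.card {p : Equiv.Perm (Fin n) × Equiv.Perm (Fin n) //
        p.1 * p.2 = σμ ∧ p.2.IsCycle ∧ p.2.support.card = n ∧
          p.1.partition.parts.card = (n - l + 2) - 1} : ℚ)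
      = (∏ i, (μ i : ℚ)) * (n - 1).factorial / (n - l + 1).factorial := by
  have h := stmt9_general (by simpa using hn) σμ
  simpa [hσ, List.prod_ofFn] using h
end
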